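/- Let L > 0, T > 0, m₁, m₂ > 0, N ∈ ℕ with N ≥ 2, a := 1/N. Let φ : ℝ × [0,T] → ℝ be continuous in t and C⁶ in α with φ(α+1,t) = φ(α,t) − L, ∂_α φ ≤ −m₁ < 0, and |∂_α^k φ| ≤ m₂ for 1 ≤ k ≤ 6, and set y_i(t) := φ((N−i)/N, t) for i ∈ ℤ (so y_{i+N} = y_i + L and m₁ a ≤ y_{i+1}−y_i ≤ m₂ a). For an N-periodic sequence z = (z_i)_{i∈ℤ} (z_{i+N} = z_i) define M_i := 1/(y_{i+1}−y_i) + a²/(y_{i+1}−y_i)³ − 1/(y_i−y_{i−1}) − a²/(y_i−y_{i−1})³ − (2πa/L²)·Σ_{j=1,j≠i}^N cot(π(y_j−y_i)/L), and T_i := −(z_{i+1}−z_i)/(y_{i+1}−y_i)² − 3a²(z_{i+1}−z_i)/(y_{i+1}−y_i)⁴ + (z_i−z_{i−1})/(y_i−y_{i−1})² + 3a²(z_i−z_{i−1})/(y_i−y_{i−1})⁴ + (2π²a/L³)·Σ_{j=1,j≠i}^N (z_j−z_i)/sin²(π(y_j−y_i)/L). Suppose z : [0,T] → ℝ^ℤ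 is a C¹ N-periodic solution of the linearized system dz_i/dt = (1/a)·[ (T_{i+1}−T_i)/(y_{i+1}−y_i) − (T_i−T_{i−1})/(y_i−y_{i−1}) ] − (1/a)·[ ((z_{i+1}−z_i)/(y_{i+1}−y_i)²)(M_{i+1}−M_i) − ((z_i−z_{i−1})/(y_i−y_{i−1})²)(M_i−M_{i−1}) ]. Then there is C = C(m₁, m₂, L, T), independent of N, such that ‖z(t)‖ ≤ C·‖z(0)‖ for all t ∈ [0,T], where ‖z‖ := ( Σ_{i=1}^N a·z_i² )^{1/2}. -/

import Mathlib

open Real Filter Topology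

/-- `M_i = f_i(y)`: the chemical potential at the background configuration `y`, `a = 1/N`;
the lattice sum is over the period window `j ∈ {i+1, …, i+N−1}`, which by `π`-periodicity of
`cot` agrees with `Σ_{j=1,j≠i}^N`. -/
noncomputable def Mlin (N : ℕ) (L : ℝ) (y : ℤ → ℝ) (i : ℤ) : ℝ :=
  1 / (y (i + 1) - y i) + (N:ℝ)⁻¹ ^ 2 / (y (i + 1) - y i) ^ 3
    - 1 / (y i - y (i - 1)) - (N:ℝ)⁻¹ ^ 2 / (y i - y (i - 1)) ^ 3
    - (2 * π * (N:ℝ)⁻¹ / L ^ 2) *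
        (∑ j ∈ Finset.Ico (i + 1) (i + (N:ℤ)), Real.cot (π * (y j - y i) / L))

/-- `T_i`: the first variation of `f_i` at `y` in direction `z`, `a = 1/N`; the lattice sum is
over the period window `j ∈ {i+1, …, i+N−1}` (which agrees with `Σ_{j=1,j≠i}^N` by
periodicity of `sin²` and of `z`). -/
noncomputable def Tlin (N : ℕ) (L : ℝ) (y z : ℤ → ℝ) (i : ℤ) : ℝ :=
  -(z (i + 1) - z i) / (y (i + 1) - y i) ^ 2
    - 3 * (N:ℝ)⁻¹ ^ 2 * (z (i + 1) - z i) / (y (i + 1) - y i) ^ 4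
    + (z i - z (i - 1)) / (y i - y (i - 1)) ^ 2
    + 3 * (N:ℝ)⁻¹ ^ 2 * (z i - z (i - 1)) / (y i - y (i - 1)) ^ 4
    + (2 * π ^ 2 * (N:ℝ)⁻¹ / L ^ 3) *
        (∑ j ∈ Finset.Ico (i + 1) (i + (N:ℤ)),
          (z j - z i) / Real.sin (π * (y j - y i) / L) ^ 2)

/-- The right-hand side of the linearized step-flow ODE system. -/
noncomputable def Zrhs (N : ℕ) (L : ℝ) (y z : ℤ → ℝ) (i : ℤ) : ℝ :=
  (N:ℝ) * ((Tlin N L y z (i + 1) - Tlin N L y z i) / (y (i + 1) - y i)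
      - (Tlin N L y z i - Tlin N L y z (i - 1)) / (y i - y (i - 1)))
    - (N:ℝ) * (((z (i + 1) - z i) / (y (i + 1) - y i) ^ 2)
          * (Mlin N L y (i + 1) - Mlin N L y i)
        - ((z i - z (i - 1)) / (y i - y (i - 1)) ^ 2)
          * (Mlin N L y i - Mlin N L y (i - 1)))

/-- sum over one period -/
noncomputable def PS (N : ℕ) (f : ℤ → ℝ) : ℝ := ∑ i ∈ Finset.Icc (1:ℤ) (N:ℤ), f i

lemma PS_shift1 (N : ℕ) (f : ℤ → ℝ) (hf : ∀ i, f (i + (N:ℤ)) = f i) :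
    PS N (fun i => f (i + 1)) = PS N f := by
  have h1 : PS N (fun i => f (i + 1)) = ∑ i ∈ Finset.Icc (2:ℤ) ((N:ℤ) + 1), f i := by
    unfold PS
    refine Finset.sum_nbij' (fun i => i + 1) (fun i => i - 1) ?_ ?_ ?_ ?_ ?_ <;>
      intro i <;> simp <;> omega
  rcases Nat.eq_zero_or_pos N with h | h
  · subst h; simp [PS]
  · rw [h1]
    unfold PS
    have e1 : Finset.Icc (1:ℤ) (N:ℤ) = insert 1 (Finset.Icc (2:ℤ) (N:ℤ)) := by
      ext x; simp; omega
    have e2 : Finset.Icc (2:ℤ) ((N:ℤ) + 1) = insert ((N:ℤ)+1) (Finset.Icc (2:ℤ) (N:ℤ)) := by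
      ext x; simp; omega
    rw [e1, e2, Finset.sum_insert (by simp), Finset.sum_insert (by simp)]
    have := hf 1
    rw [add_comm (1:ℤ)] at this
    rw [this]

lemma PS_shift (N : ℕ) (f : ℤ → ℝ) (hf : ∀ i, f (i + (N:ℤ)) = f i) (k : ℤ) :
    PS N (fun i => f (i + k)) = PS N f := by
  induction k using Int.induction_on with
  | zero => simp
  | succ k ih =>
    rw [← ih]
    have := PS_shift1 N (fun i => f (i + k)) (fun i => by
      rw [show i + (N:ℤ) + k = (i + k) + N by ring, hf])
    rw [← this]
    congr 1; ext i; congr 1; ring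
  | pred k ih =>
    rw [← ih]
    have := PS_shift1 N (fun i => f (i + (-(k:ℤ) - 1))) (fun i => by
      rw [show i + (N:ℤ) + (-(k:ℤ) - 1) = (i + (-(k:ℤ) - 1)) + N by ring, hf])
    rw [← this]
    congr 1; ext i; congr 1; ring

lemma PS_add (N : ℕ) (f g : ℤ → ℝ) : PS N (fun i => f i + g i) = PS N f + PS N g :=
  Finset.sum_add_distrib

lemma PS_sub (N : ℕ) (f g : ℤ → ℝ) : PS N (fun i => f i - g i) = PS N f - PS N g :=
  Finset.sum_sub_distrib _ _

lemma PS_mul (N : ℕ) (c : ℝ) (f : ℤ → ℝ) : PS N (fun i => c * f i) = c * PS N f :=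
  (Finset.mul_sum _ _ _).symm

lemma PS_mono (N : ℕ) (f g : ℤ → ℝ) (h : ∀ i, f i ≤ g i) : PS N f ≤ PS N g :=
  Finset.sum_le_sum (fun i _ => h i)

lemma PS_sum {ι : Type*} (N : ℕ) (s : Finset ι) (f : ι → ℤ → ℝ) :
    PS N (fun i => ∑ k ∈ s, f k i) = ∑ k ∈ s, PS N (f k) :=
  Finset.sum_comm

lemma PS_sq_nonneg (N : ℕ) (f : ℤ → ℝ) : 0 ≤ PS N (fun i => f i ^ 2) :=
  Finset.sum_nonneg (fun i _ => sq_nonneg _)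

/-- summation by parts -/
lemma PS_parts (N : ℕ) (f g : ℤ → ℝ) (hf : ∀ i, f (i + (N:ℤ)) = f i)
    (hg : ∀ i, g (i + (N:ℤ)) = g i) :
    PS N (fun i => f i * (g i - g (i - 1))) = - PS N (fun i => (f (i + 1) - f i) * g i) := by
  have := PS_shift N (fun i => f (i + 1) * g i) (fun i => by
      rw [show i + (N:ℤ) + 1 = (i + 1) + N by ring, hf, hg]) (-1)
  have e1 : PS N (fun i => f i * (g i - g (i - 1))) =
      PS N (fun i => f i * g i) - PS N (fun i => f (i + -1 + 1) * g (i + -1)) := by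
    rw [← PS_sub]; congr 1; ext i
    rw [show i + -1 + 1 = i by ring, show i + -1 = i - 1 by ring]; ring
  have e2 : PS N (fun i => (f (i + 1) - f i) * g i) =
      PS N (fun i => f (i + 1) * g i) - PS N (fun i => f i * g i) := by
    rw [← PS_sub]; congr 1; ext i; ring
  rw [e1, e2, this]; ring

/-- Young with shift -/
lemma PS_young (N : ℕ) (f g : ℤ → ℝ) (hg : ∀ i, g (i + (N:ℤ)) = g i) (k : ℤ) (e : ℝ)
    (he : 0 < e) :
    PS N (fun i => |f i| * |g (i + k)|) ≤
      e * PS N (fun i => f i ^ 2) + (1 / (4 * e)) * PS N (fun i => g i ^ 2) := by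
  rw [← PS_shift N (fun i => g i ^ 2) (fun _ => by rw [hg]) k, ← PS_mul, ← PS_mul, ← PS_add]
  apply PS_mono
  intro i
  rw [← sq_abs (f i), ← sq_abs (g (i + k))]
  have : e * |f i| ^ 2 + 1 / (4 * e) * |g (i + k)| ^ 2 - |f i| * |g (i + k)|
     = e * (|f i| - |g (i+k)| / (2 * e)) ^ 2 := by field_simp; ring
  nlinarith [mul_nonneg he.le (sq_nonneg (|f i| - |g (i+k)| / (2 * e)))]

lemma window (N K : ℕ) (hK : 2 * K < N) (F : ℤ → ℝ) (hF : ∀ i, F (i + (N:ℤ)) = F i) (i : ℤ) :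
    ∑ j ∈ Finset.Ico (i + 1) (i + (N:ℤ)), F j =
      ∑ k ∈ Finset.Ico 1 (K + 1), (F (i + (k:ℕ)) + F (i - (k:ℕ))) +
      ∑ k ∈ Finset.Ico (K + 1) (N - K), F (i + (k:ℕ)) := by
  have h1 : ∑ j ∈ Finset.Ico (i + 1) (i + (N:ℤ)), F j
      = ∑ k ∈ Finset.Ico 1 N, F (i + (k:ℕ)) := by
    refine Finset.sum_nbij' (fun j => (j - i).toNat) (fun k => i + (k:ℕ)) ?_ ?_ ?_ ?_ ?_
    · intro j; simp; omega
    · intro j; simp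
    · intro j; simp; omega
    · intro j; simp
    · intro j hj; simp at hj; congr 1; omega
  rw [h1, ← Finset.sum_Ico_consecutive _ (show 1 ≤ K + 1 by omega) (show K + 1 ≤ N by omega),
    ← Finset.sum_Ico_consecutive _ (show K + 1 ≤ N - K by omega) (show N - K ≤ N by omega),
    Finset.sum_add_distrib]
  have h2 : ∑ k ∈ Finset.Ico (N - K) N, F (i + (k:ℕ)) =
      ∑ k ∈ Finset.Ico 1 (K + 1), F (i - (k:ℕ)) := by
    refine Finset.sum_nbij' (fun k => N - k) (fun k => N - k) ?_ ?_ ?_ ?_ ?_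
    · intro j; simp; omega
    · intro j; simp; omega
    · intro j; simp; omega
    · intro j; simp; omega
    · intro j hj; simp at hj
      rw [← hF (i - _)]; congr 1; push_cast [Nat.cast_sub hj.2.le]; ring
  rw [h2]; ring

lemma abs_div_le' {x y A B : ℝ} (hB : 0 < B) (h1 : |x| ≤ A) (h2 : B ≤ y) : |x / y| ≤ A / B := by
  rw [abs_div, abs_of_pos (lt_of_lt_of_le hB h2)]
  exact div_le_div₀ (le_trans (abs_nonneg _) h1) h1 hB h2

lemma cot_pair (α β c D s : ℝ) (hc : 0 < c) (hs : 0 < s) (hα : c * s ≤ sin α)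
    (hβ : c * s ≤ sin β) (hd : |α - β| ≤ D * s ^ 2) :
    |Real.cot α - Real.cot β| ≤ D / c ^ 2 := by
  have hcs : 0 < c * s := by positivity
  have e : Real.cot α - Real.cot β = sin (β - α) / (sin α * sin β) := by
    rw [Real.cot_eq_cos_div_sin, Real.cot_eq_cos_div_sin, sin_sub]
    have : sin α ≠ 0 := by linarith
    have : sin β ≠ 0 := by linarith
    field_simp; try ring
  rw [e]
  have h1 : |sin (β - α)| ≤ D * s ^ 2 := by
    rw [abs_sub_comm] at hd
    exact (Real.abs_sin_le_abs).trans hd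
  have h2 : (c * s) * (c * s) ≤ sin α * sin β := mul_le_mul hα hβ hcs.le (by linarith)
  refine (abs_div_le' (by positivity) h1 h2).trans (le_of_eq ?_)
  field_simp

lemma sq_pair (α β c C D s : ℝ) (hc : 0 < c) (hs : 0 < s) (hα : c * s ≤ sin α)
    (hβ : c * s ≤ sin β) (hd : |α - β| ≤ D * s ^ 2) (a0 : 0 ≤ α) (b0 : 0 ≤ β)
    (a1 : α ≤ C * s) (b1 : β ≤ C * s) :
    |α / sin α ^ 2 - β / sin β ^ 2| ≤ 3 * D * C ^ 2 / c ^ 4 := by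
  have hcs : 0 < c * s := by positivity
  have e : α / sin α ^ 2 - β / sin β ^ 2 =
      ((α - β) * sin β ^ 2 + β * (sin (β - α) * sin (β + α))) / (sin α ^ 2 * sin β ^ 2) := by
    have h1 : sin (β - α) * sin (β + α) = sin β ^ 2 - sin α ^ 2 := by
      rw [sin_sub, sin_add]
      have := sin_sq_add_cos_sq α
      have := sin_sq_add_cos_sq β
      rw [show cos α ^ 2 = 1 - sin α ^ 2 by linarith] at *
      have h3 : cos α ^ 2 = 1 - sin α ^ 2 := by rw [cos_sq']
      have h4 : cos β ^ 2 = 1 - sin β ^ 2 := by rw [cos_sq']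
      linear_combination (sin β ^ 2) * h3 - (sin α ^ 2) * h4
    rw [h1]
    have : sin α ≠ 0 := by linarith
    have : sin β ≠ 0 := by linarith
    field_simp; try ring
  rw [e]
  have g1 : |sin (β - α)| ≤ D * s ^ 2 := by
    rw [abs_sub_comm] at hd
    exact (Real.abs_sin_le_abs).trans hd
  have g2 : |sin (β + α)| ≤ 2 * (C * s) := by
    refine (Real.abs_sin_le_abs).trans ?_
    rw [abs_of_nonneg (by linarith)]; linarith
  have g3 : sin β ^ 2 ≤ (C * s) ^ 2 := by
    have := Real.sin_le b0
    exact pow_le_pow_left₀ (by linarith) (by linarith) 2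
  have hD : 0 ≤ D * s ^ 2 := (abs_nonneg _).trans hd
  have h1 : |(α - β) * sin β ^ 2 + β * (sin (β - α) * sin (β + α))|
      ≤ (D * s ^ 2) * (C * s) ^ 2 + (C * s) * ((D * s ^ 2) * (2 * (C * s))) := by
    refine (abs_add_le _ _).trans ?_
    rw [abs_mul, abs_mul, abs_mul, abs_of_nonneg b0, abs_of_nonneg (sq_nonneg (sin β))]
    gcongr
    linarith
  have h2 : (c * s) ^ 2 * (c * s) ^ 2 ≤ sin α ^ 2 * sin β ^ 2 := by gcongr
  refine (abs_div_le' (by positivity) h1 h2).trans (le_of_eq ?_)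
  field_simp; try ring
structure GoodY (N : ℕ) (L m₁ m₂ : ℝ) (y : ℤ → ℝ) : Prop where
  hN : 2 ≤ N
  hL : 0 < L
  h1 : 0 < m₁
  h2 : 0 < m₂
  per : ∀ i, y (i + (N:ℤ)) = y i + L
  lo : ∀ i, m₁ * (N:ℝ)⁻¹ ≤ y (i + 1) - y i
  hi : ∀ i, y (i + 1) - y i ≤ m₂ * (N:ℝ)⁻¹
  sec : ∀ (i : ℤ) (k : ℕ), |y (i + k) + y (i - k) - 2 * y i| ≤ 2 * m₂ * ((k:ℝ) * (N:ℝ)⁻¹) ^ 2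

section
variable {N : ℕ} {L m₁ m₂ : ℝ} {y : ℤ → ℝ}

lemma GoodY.a_pos (h : GoodY N L m₁ m₂ y) : 0 < (N:ℝ)⁻¹ := by
  have := h.hN
  have : (0:ℝ) < N := by exact_mod_cast (by omega)
  positivity

lemma GoodY.aN (h : GoodY N L m₁ m₂ y) : (N:ℝ)⁻¹ * N = 1 := by
  have := h.hN
  have : (0:ℝ) < N := by exact_mod_cast (by omega)
  field_simp

lemma GoodY.gap_lo (h : GoodY N L m₁ m₂ y) (i : ℤ) (k : ℕ) :
    m₁ * ((k:ℝ) * (N:ℝ)⁻¹) ≤ y (i + k) - y i := by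
  induction k with
  | zero => simp
  | succ k ih =>
    have := h.lo (i + k)
    push_cast
    rw [← add_assoc]; nlinarith

lemma GoodY.gap_hi (h : GoodY N L m₁ m₂ y) (i : ℤ) (k : ℕ) :
    y (i + k) - y i ≤ m₂ * ((k:ℝ) * (N:ℝ)⁻¹) := by
  induction k with
  | zero => simp
  | succ k ih =>
    have := h.hi (i + k)
    push_cast
    rw [← add_assoc]; nlinarith

lemma GoodY.sin_near (h : GoodY N L m₁ m₂ y) (i : ℤ) (k : ℕ)
    (hk : m₂ * ((k:ℝ) * (N:ℝ)⁻¹) ≤ L / 2) :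
    (2 * m₁ / L) * ((k:ℝ) * (N:ℝ)⁻¹) ≤ sin (π * (y (i + k) - y i) / L) := by
  have h1 := h.gap_lo i k
  have h2 := h.gap_hi i k
  have hL := h.hL
  have hm := h.h1
  have ha := h.a_pos
  have hp := Real.pi_pos
  have h0 : 0 ≤ y (i + k) - y i := le_trans (by positivity) h1
  have := Real.mul_le_sin (x := π * (y (i + k) - y i) / L) (by positivity) (by
    rw [div_le_div_iff₀ hL (by norm_num)]; nlinarith)
  refine le_trans ?_ this
  have e : 2 / π * (π * (y (i + k) - y i) / L) = (2 / L) * (y (i + k) - y i) := by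
    field_simp
  rw [e, show (2 * m₁ / L) * ((k:ℝ) * (N:ℝ)⁻¹) = (2 / L) * (m₁ * ((k:ℝ) * (N:ℝ)⁻¹)) by ring]
  gcongr

lemma GoodY.sin_far (h : GoodY N L m₁ m₂ y) (i : ℤ) (k : ℕ) (e : ℝ) (he : 0 < e)
    (hkN : k ≤ N) (h1 : e ≤ (k:ℝ) * (N:ℝ)⁻¹) (h2 : e ≤ ((N - k : ℕ):ℝ) * (N:ℝ)⁻¹) :
    (2 * m₁ / L) * e ≤ sin (π * (y (i + k) - y i) / L) := by
  have g1 := h.gap_lo i k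
  have g2 := h.gap_lo (i + k) (N - k)
  have e3 : i + (k:ℤ) + ((N - k : ℕ):ℤ) = i + N := by push_cast [Nat.cast_sub hkN]; ring
  rw [e3, h.per] at g2
  have hL := h.hL
  have hm := h.h1
  have hp := Real.pi_pos
  have f1 : m₁ * e ≤ y (i + k) - y i := le_trans (by gcongr) g1
  have f2 : m₁ * e ≤ L - (y (i + k) - y i) := by
    have : m₁ * e ≤ y i + L - y (i + k) := le_trans (by gcongr) g2
    linarith
  set B := y (i + k) - y i with hB
  have hme : 0 < m₁ * e := by positivity
  have hB0 : 0 ≤ B := by linarith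
  rcases le_total B (L / 2) with hb | hb
  · have := Real.mul_le_sin (x := π * B / L) (by positivity) (by
      rw [div_le_div_iff₀ hL (by norm_num)]; nlinarith)
    refine le_trans ?_ this
    have e' : 2 / π * (π * B / L) = (2 / L) * B := by field_simp
    rw [e', show (2 * m₁ / L) * e = (2 / L) * (m₁ * e) by ring]
    gcongr
  · have hB2 : 0 ≤ L - B := by linarith
    have := Real.mul_le_sin (x := π * (L - B) / L) (by positivity) (by
      rw [div_le_div_iff₀ hL (by norm_num)]; nlinarith)
    have es : sin (π * B / L) = sin (π * (L - B) / L) := by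
      rw [← sin_pi_sub]; congr 1; field_simp
    rw [es]
    refine le_trans ?_ this
    have e' : 2 / π * (π * (L - B) / L) = (2 / L) * (L - B) := by field_simp
    rw [e', show (2 * m₁ / L) * e = (2 / L) * (m₁ * e) by ring]
    gcongr

/-- difference of the two angles -/
lemma GoodY.angle_diff (h : GoodY N L m₁ m₂ y) (i : ℤ) (k : ℕ) :
    |π * (y (i + k) - y i) / L - π * (y i - y (i - k)) / L| ≤
      (2 * π * m₂ / L) * ((k:ℝ) * (N:ℝ)⁻¹) ^ 2 := by
  have hL := h.hL
  have hp := Real.pi_pos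
  have := h.sec i k
  rw [show π * (y (i + k) - y i) / L - π * (y i - y (i - k)) / L
    = (π / L) * (y (i + k) + y (i - k) - 2 * y i) by ring, abs_mul, abs_of_pos (by positivity)]
  calc _ ≤ (π / L) * (2 * m₂ * ((k:ℝ) * (N:ℝ)⁻¹) ^ 2) := by gcongr
    _ = _ := by ring

lemma GoodY.sin_near' (h : GoodY N L m₁ m₂ y) (i : ℤ) (k : ℕ)
    (hk : m₂ * ((k:ℝ) * (N:ℝ)⁻¹) ≤ L / 2) :
    (2 * m₁ / L) * ((k:ℝ) * (N:ℝ)⁻¹) ≤ sin (π * (y i - y (i - k)) / L) := by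
  have := h.sin_near (i - k) k hk
  rwa [sub_add_cancel] at this

lemma GoodY.gap_hi' (h : GoodY N L m₁ m₂ y) (i : ℤ) (k : ℕ) :
    y i - y (i - k) ≤ m₂ * ((k:ℝ) * (N:ℝ)⁻¹) := by
  have := h.gap_hi (i - k) k
  rwa [sub_add_cancel] at this

lemma GoodY.gap_lo' (h : GoodY N L m₁ m₂ y) (i : ℤ) (k : ℕ) :
    m₁ * ((k:ℝ) * (N:ℝ)⁻¹) ≤ y i - y (i - k) := by
  have := h.gap_lo (i - k) k
  rwa [sub_add_cancel] at this

lemma GoodY.cot_per (h : GoodY N L m₁ m₂ y) (i j : ℤ) :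
    Real.cot (π * (y (j + (N:ℤ)) - y i) / L) = Real.cot (π * (y j - y i) / L) := by
  have hL := h.hL
  rw [h.per, show π * (y j + L - y i) / L = π * (y j - y i) / L + π by field_simp; ring,
    Real.cot_eq_cos_div_sin, Real.cot_eq_cos_div_sin, cos_add_pi, sin_add_pi, neg_div_neg_eq]

lemma GoodY.sin_per (h : GoodY N L m₁ m₂ y) (i j : ℤ) :
    Real.sin (π * (y (j + (N:ℤ)) - y i) / L) ^ 2 = Real.sin (π * (y j - y i) / L) ^ 2 := by
  have hL := h.hL
  rw [h.per, show π * (y j + L - y i) / L = π * (y j - y i) / L + π by field_simp; ring,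
    sin_add_pi, neg_sq]

/-- the cutoff -/
lemma GoodY.cut (h : GoodY N L m₁ m₂ y) (e : ℝ) (he : 0 < e) (he1 : e < 1 / 2)
    (K : ℕ) (hK : K = ⌊e * N⌋₊) :
    2 * K < N ∧ (N:ℝ)⁻¹ * K ≤ e ∧ (∀ k ∈ Finset.Ico 1 (K + 1), 0 < (k:ℝ) * (N:ℝ)⁻¹ ∧
      (k:ℝ) * (N:ℝ)⁻¹ ≤ e) ∧ (∀ k ∈ Finset.Ico (K + 1) (N - K), k ≤ N ∧ e ≤ (k:ℝ) * (N:ℝ)⁻¹ ∧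
      e ≤ ((N - k : ℕ):ℝ) * (N:ℝ)⁻¹) := by
  have hN : (0:ℝ) < N := by have := h.hN; exact_mod_cast (by omega)
  have h1 : (K:ℝ) ≤ e * N := by rw [hK]; exact Nat.floor_le (by positivity)
  have h2 : e * N < K + 1 := by rw [hK]; exact Nat.lt_floor_add_one _
  refine ⟨?_, ?_, ?_, ?_⟩
  · have : (2:ℝ) * K < N := by nlinarith
    exact_mod_cast this
  · rw [inv_mul_le_iff₀ hN]; linarith
  · intro k hk
    simp at hk
    have a1 : (1:ℝ) ≤ k := by exact_mod_cast hk.1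
    have a2 : (k:ℝ) ≤ K := by exact_mod_cast (by omega)
    refine ⟨by positivity, ?_⟩
    rw [mul_inv_le_iff₀ hN]; linarith
  · intro k hk
    simp at hk
    have a1 : (K:ℝ) + 1 ≤ k := by exact_mod_cast hk.1
    have a2 : (K:ℝ) + 1 ≤ ((N - k : ℕ):ℝ) := by exact_mod_cast (by omega)
    refine ⟨by omega, ?_, ?_⟩
    · rw [le_mul_inv_iff₀ hN]; linarith
    · rw [le_mul_inv_iff₀ hN]; linarith

lemma GoodY.cot_sum (h : GoodY N L m₁ m₂ y) (e : ℝ) (he : 0 < e) (he1 : e < 1 / 2)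
    (he2 : m₂ * e ≤ L / 2) (i : ℤ) :
    |(N:ℝ)⁻¹ * ∑ j ∈ Finset.Ico (i + 1) (i + (N:ℤ)), Real.cot (π * (y j - y i) / L)| ≤
      (2 * π * m₂ / L) / (2 * m₁ / L) ^ 2 + 1 / ((2 * m₁ / L) * e) := by
  obtain ⟨hK, hK1, hn, hf⟩ := h.cut e he he1 _ rfl
  set K := ⌊e * N⌋₊
  have hL := h.hL
  have hm := h.h1
  have hm2 := h.h2
  have ha := h.a_pos
  have hp := Real.pi_pos
  rw [window N K hK (fun j => Real.cot (π * (y j - y i) / L)) (fun j => h.cot_per i j) i]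
  rw [abs_mul, abs_of_pos ha]
  have s1 : |∑ k ∈ Finset.Ico 1 (K + 1), (Real.cot (π * (y (i + (k:ℕ)) - y i) / L) +
      Real.cot (π * (y (i - (k:ℕ)) - y i) / L))| ≤
      K * ((2 * π * m₂ / L) / (2 * m₁ / L) ^ 2) := by
    refine (Finset.abs_sum_le_sum_abs _ _).trans ?_
    refine (Finset.sum_le_card_nsmul _ _ ((2 * π * m₂ / L) / (2 * m₁ / L) ^ 2) ?_).trans ?_
    · intro k hk
      obtain ⟨k0, k1⟩ := hn k hk
      have hk' : m₂ * ((k:ℝ) * (N:ℝ)⁻¹) ≤ L / 2 := le_trans (by gcongr) he2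
      have := cot_pair _ _ (2 * m₁ / L) _ _ (by positivity) k0 (h.sin_near i k hk')
        (h.sin_near' i k hk') (h.angle_diff i k)
      have e2 : Real.cot (π * (y (i - (k:ℕ)) - y i) / L) =
          - Real.cot (π * (y i - y (i - (k:ℕ))) / L) := by
        rw [show π * (y (i - (k:ℕ)) - y i) / L = -(π * (y i - y (i - (k:ℕ))) / L) by ring,
          Real.cot_eq_cos_div_sin, Real.cot_eq_cos_div_sin, cos_neg, sin_neg, div_neg]
      rw [e2, ← sub_eq_add_neg]
      exact this
    · simp
  have s2 : |∑ k ∈ Finset.Ico (K + 1) (N - K), Real.cot (π * (y (i + (k:ℕ)) - y i) / L)| ≤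
      N * (1 / ((2 * m₁ / L) * e)) := by
    refine (Finset.abs_sum_le_sum_abs _ _).trans ?_
    refine (Finset.sum_le_card_nsmul _ _ (1 / ((2 * m₁ / L) * e)) ?_).trans ?_
    · intro k hk
      obtain ⟨k0, k1, k2⟩ := hf k hk
      have := h.sin_far i k e he k0 k1 k2
      rw [Real.cot_eq_cos_div_sin]
      exact abs_div_le' (by positivity) (Real.abs_cos_le_one _) this
    · simp only [Nat.card_Ico, nsmul_eq_mul]
      gcongr
      omega
  have hc1 : 0 ≤ (2 * π * m₂ / L) / (2 * m₁ / L) ^ 2 := by positivity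
  have hKN : (N:ℝ)⁻¹ * K ≤ 1 := by linarith
  calc _ ≤ (N:ℝ)⁻¹ * (K * ((2 * π * m₂ / L) / (2 * m₁ / L) ^ 2) + N * (1 / ((2 * m₁ / L) * e))) := by
        gcongr
        exact (abs_add_le _ _).trans (add_le_add s1 s2)
    _ = ((N:ℝ)⁻¹ * K) * ((2 * π * m₂ / L) / (2 * m₁ / L) ^ 2) +
        ((N:ℝ)⁻¹ * N) * (1 / ((2 * m₁ / L) * e)) := by ring
    _ ≤ _ := by rw [h.aN]; nlinarith

/-- Lipschitz bounds for the gap functions -/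
lemma GoodY.inv_diff (h : GoodY N L m₁ m₂ y) (i : ℤ) :
    |1 / (y (i + 1) - y i) - 1 / (y i - y (i - 1))| ≤ 2 * m₂ / m₁ ^ 2 := by
  have a0 := h.a_pos
  have hm := h.h1
  have hm2 := h.h2
  have l1 := h.lo i
  have l2 := h.lo (i - 1)
  have s := h.sec i 1
  rw [sub_add_cancel] at l2
  push_cast at s
  rw [one_mul] at s
  generalize (N:ℝ)⁻¹ = a at *
  have p0 : 0 < m₁ * a := by positivity
  have e : 1 / (y (i + 1) - y i) - 1 / (y i - y (i - 1)) =
      -(y (i + 1) + y (i - 1) - 2 * y i) / ((y (i + 1) - y i) * (y i - y (i - 1))) := by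
    have : y (i + 1) - y i ≠ 0 := by linarith
    have : y i - y (i - 1) ≠ 0 := by linarith
    field_simp; ring
  rw [e]
  refine (abs_div_le' (A := 2 * m₂ * a ^ 2) (B := (m₁ * a) * (m₁ * a)) (by positivity)
    (by rwa [abs_neg]) (mul_le_mul l1 l2 p0.le (by linarith))).trans (le_of_eq ?_)
  field_simp

lemma GoodY.inv_bd (h : GoodY N L m₁ m₂ y) (i : ℤ) :
    0 < 1 / (y (i + 1) - y i) ∧ (N:ℝ)⁻¹ * (1 / (y (i + 1) - y i)) ≤ 1 / m₁ ∧
     1 / m₂ ≤ (N:ℝ)⁻¹ * (1 / (y (i + 1) - y i)) := by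
  have a0 := h.a_pos
  have hm := h.h1
  have hm2 := h.h2
  have l1 := h.lo i
  have l2 := h.hi i
  generalize (N:ℝ)⁻¹ = a at *
  have p0 : 0 < m₁ * a := by positivity
  have q0 : 0 < y (i + 1) - y i := by linarith
  refine ⟨by positivity, ?_, ?_⟩
  · rw [mul_one_div, div_le_div_iff₀ q0 hm]; linarith
  · rw [mul_one_div, div_le_div_iff₀ hm2 q0]; linarith

lemma GoodY.inv_diff3 (h : GoodY N L m₁ m₂ y) (i : ℤ) :
    |(N:ℝ)⁻¹ ^ 2 / (y (i + 1) - y i) ^ 3 - (N:ℝ)⁻¹ ^ 2 / (y i - y (i - 1)) ^ 3|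
      ≤ 6 * m₂ / m₁ ^ 4 := by
  have a0 := h.a_pos
  have hm := h.h1
  have hm2 := h.h2
  have d := h.inv_diff i
  obtain ⟨u0, u1, -⟩ := h.inv_bd i
  obtain ⟨w0, w1, -⟩ := h.inv_bd (i - 1)
  rw [sub_add_cancel] at w0 w1
  set u := 1 / (y (i + 1) - y i) with hu
  set w := 1 / (y i - y (i - 1)) with hw
  generalize (N:ℝ)⁻¹ = a at *
  have e : a ^ 2 / (y (i + 1) - y i) ^ 3 - a ^ 2 / (y i - y (i - 1)) ^ 3 =
     (u - w) * ((a * u) ^ 2 + (a * u) * (a * w) + (a * w) ^ 2) := by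
    rw [div_eq_mul_one_div, div_eq_mul_one_div (a ^ 2) ((y i - y (i - 1)) ^ 3),
      ← one_div_pow, ← one_div_pow, ← hu, ← hw]; ring
  rw [e, abs_mul, abs_of_nonneg (a := (a * u) ^ 2 + (a * u) * (a * w) + (a * w) ^ 2) (by positivity)]
  calc _ ≤ 2 * m₂ / m₁ ^ 2 * ((1 / m₁) ^ 2 + (1 / m₁) * (1 / m₁) + (1 / m₁) ^ 2) := by gcongr
    _ = _ := by field_simp; ring

/-- bound on M -/
noncomputable def CM (L m₁ m₂ e : ℝ) : ℝ := 2 * m₂ / m₁ ^ 2 + 6 * m₂ / m₁ ^ 4 +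
  (2 * π / L ^ 2) * ((2 * π * m₂ / L) / (2 * m₁ / L) ^ 2 + 1 / ((2 * m₁ / L) * e))

lemma GoodY.M_bd (h : GoodY N L m₁ m₂ y) (e : ℝ) (he : 0 < e) (he1 : e < 1 / 2)
    (he2 : m₂ * e ≤ L / 2) (i : ℤ) : |Mlin N L y i| ≤ CM L m₁ m₂ e := by
  have hL := h.hL
  have hp := Real.pi_pos
  have c := h.cot_sum e he he1 he2 i
  have d := h.inv_diff i
  have d3 := h.inv_diff3 i
  have c2 : |(2 * π / L ^ 2) * ((N:ℝ)⁻¹ * ∑ j ∈ Finset.Ico (i + 1) (i + (N:ℤ)),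
      Real.cot (π * (y j - y i) / L))| ≤ (2 * π / L ^ 2) *
      ((2 * π * m₂ / L) / (2 * m₁ / L) ^ 2 + 1 / ((2 * m₁ / L) * e)) := by
    rw [abs_mul, abs_of_pos (by positivity)]; gcongr
  have e : Mlin N L y i = (1 / (y (i + 1) - y i) - 1 / (y i - y (i - 1))) +
    ((N:ℝ)⁻¹ ^ 2 / (y (i + 1) - y i) ^ 3 - (N:ℝ)⁻¹ ^ 2 / (y i - y (i - 1)) ^ 3) -
    (2 * π / L ^ 2) * ((N:ℝ)⁻¹ * ∑ j ∈ Finset.Ico (i + 1) (i + (N:ℤ)),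
      Real.cot (π * (y j - y i) / L)) := by
    unfold Mlin; ring
  rw [e]
  unfold CM
  refine (abs_sub _ _).trans ?_
  refine add_le_add ((abs_add_le _ _).trans (add_le_add d d3)) c2

end
noncomputable def vv (y z : ℤ → ℝ) (i : ℤ) : ℝ := (z (i + 1) - z i) / (y (i + 1) - y i)
noncomputable def qq (N : ℕ) (y z : ℤ → ℝ) (i : ℤ) : ℝ := (vv y z i - vv y z (i - 1)) * N

section
variable {N : ℕ} {L m₁ m₂ : ℝ} {y z : ℤ → ℝ}

lemma GoodY.v_per (h : GoodY N L m₁ m₂ y) (hz : ∀ i, z (i + (N:ℤ)) = z i) (i : ℤ) :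
    vv y z (i + (N:ℤ)) = vv y z i := by
  unfold vv
  rw [show i + (N:ℤ) + 1 = (i + 1) + N by ring, hz, hz, h.per, h.per]
  congr 1; ring

lemma GoodY.q_per (h : GoodY N L m₁ m₂ y) (hz : ∀ i, z (i + (N:ℤ)) = z i) (i : ℤ) :
    qq N y z (i + (N:ℤ)) = qq N y z i := by
  unfold qq
  rw [show i + (N:ℤ) - 1 = (i - 1) + N by ring, h.v_per hz, h.v_per hz]

lemma GoodY.Y_pos (h : GoodY N L m₁ m₂ y) (i : ℤ) : 0 < y (i + 1) - y i :=
  lt_of_lt_of_le (mul_pos h.h1 h.a_pos) (h.lo i)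

lemma GoodY.z_diff (h : GoodY N L m₁ m₂ y) (i : ℤ) :
    z (i + 1) - z i = vv y z i * (y (i + 1) - y i) := by
  have := h.Y_pos i
  unfold vv; field_simp

lemma GoodY.v_diff (h : GoodY N L m₁ m₂ y) (i : ℤ) :
    vv y z i - vv y z (i - 1) = (N:ℝ)⁻¹ * qq N y z i := by
  unfold qq
  rw [mul_comm, mul_assoc, mul_comm (N:ℝ), h.aN, mul_one]

lemma GoodY.v_up (h : GoodY N L m₁ m₂ y) (i : ℤ) (k : ℕ) :
    |vv y z (i + k) - vv y z i| ≤ (N:ℝ)⁻¹ * ∑ r ∈ Finset.range k, |qq N y z (i + 1 + r)| := by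
  have a0 := h.a_pos
  induction k with
  | zero => simp
  | succ k ih =>
    have := h.v_diff (z := z) (i + 1 + k)
    rw [show i + 1 + (k:ℤ) - 1 = i + k by ring] at this
    rw [Finset.sum_range_succ, mul_add, ← abs_of_pos a0, ← abs_mul, ← this, abs_of_pos a0]
    push_cast
    rw [show i + ((k:ℤ) + 1) = i + 1 + k by ring, show vv y z (i + 1 + k) - vv y z i =
      (vv y z (i + k) - vv y z i) + (vv y z (i + 1 + k) - vv y z (i + k)) by ring]
    exact (abs_add_le _ _).trans (by linarith)

lemma GoodY.v_down (h : GoodY N L m₁ m₂ y) (i : ℤ) (k : ℕ) :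
    |vv y z (i - k) - vv y z i| ≤ (N:ℝ)⁻¹ * ∑ r ∈ Finset.range k, |qq N y z (i - r)| := by
  have a0 := h.a_pos
  induction k with
  | zero => simp
  | succ k ih =>
    have := h.v_diff (z := z) (i - k)
    rw [Finset.sum_range_succ, mul_add, ← abs_of_pos a0, ← abs_mul, ← this, abs_of_pos a0]
    push_cast
    rw [show i - ((k:ℤ) + 1) = i - k - 1 by ring, show vv y z (i - k - 1) - vv y z i =
      (vv y z (i - k) - vv y z i) - (vv y z (i - k) - vv y z (i - k - 1)) by ring]
    exact (abs_sub _ _).trans (by linarith)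

lemma GoodY.R_up (h : GoodY N L m₁ m₂ y) (i : ℤ) (k : ℕ) :
    |z (i + k) - z i - vv y z i * (y (i + k) - y i)| ≤
      m₂ * (N:ℝ)⁻¹ ^ 2 * k * ∑ r ∈ Finset.range k, |qq N y z (i + 1 + r)| := by
  have a0 := h.a_pos
  have hm2 := h.h2
  induction k with
  | zero => simp
  | succ k ih =>
    have hv := h.v_up (z := z) i k
    have hd := h.z_diff (z := z) (i + k)
    have hY := h.Y_pos (i + k)
    have hh := h.hi (i + k)
    rw [Finset.sum_range_succ]
    have hs : 0 ≤ ∑ r ∈ Finset.range k, |qq N y z (i + 1 + r)| :=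
      Finset.sum_nonneg (fun _ _ => abs_nonneg _)
    have hq := abs_nonneg (qq N y z (i + 1 + k))
    generalize ∑ r ∈ Finset.range k, |qq N y z (i + 1 + r)| = S at *
    push_cast
    rw [← add_assoc]
    have e : z (i + k + 1) - z i - vv y z i * (y (i + k + 1) - y i) =
      (z (i + k) - z i - vv y z i * (y (i + k) - y i)) +
        (y (i + k + 1) - y (i + k)) * (vv y z (i + k) - vv y z i) := by
      linear_combination hd
    rw [e]
    refine (abs_add_le _ _).trans ?_
    rw [abs_mul, abs_of_pos hY]
    have : (y (i + k + 1) - y (i + k)) * |vv y z (i + k) - vv y z i| ≤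
      (m₂ * (N:ℝ)⁻¹) * ((N:ℝ)⁻¹ * S) := by gcongr
    have : 0 ≤ m₂ * (N:ℝ)⁻¹ ^ 2 * ((k:ℝ) + 1) * |qq N y z (i + 1 + k)| := by positivity
    nlinarith

lemma GoodY.R_down (h : GoodY N L m₁ m₂ y) (i : ℤ) (k : ℕ) :
    |z i - z (i - k) - vv y z i * (y i - y (i - k))| ≤
      m₂ * (N:ℝ)⁻¹ ^ 2 * k * ∑ r ∈ Finset.range k, |qq N y z (i - r)| := by
  have a0 := h.a_pos
  have hm2 := h.h2
  induction k with
  | zero => simp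
  | succ k ih =>
    have hv := h.v_down (z := z) i (k + 1)
    have hd := h.z_diff (z := z) (i - k - 1)
    have hY := h.Y_pos (i - k - 1)
    have hh := h.hi (i - k - 1)
    rw [sub_add_cancel] at hd hY hh
    rw [Finset.sum_range_succ] at *
    have hs : 0 ≤ ∑ r ∈ Finset.range k, |qq N y z (i - r)| :=
      Finset.sum_nonneg (fun _ _ => abs_nonneg _)
    have hq := abs_nonneg (qq N y z (i - k))
    generalize ∑ r ∈ Finset.range k, |qq N y z (i - r)| = S at *
    push_cast at *
    rw [← sub_sub] at *
    have e : z i - z (i - k - 1) - vv y z i * (y i - y (i - k - 1)) =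
      (z i - z (i - k) - vv y z i * (y i - y (i - k))) +
        (y (i - k) - y (i - k - 1)) * (vv y z (i - k - 1) - vv y z i) := by
      linear_combination hd
    rw [e]
    refine (abs_add_le _ _).trans ?_
    rw [abs_mul, abs_of_pos hY]
    have : (y (i - k) - y (i - k - 1)) * |vv y z (i - k - 1) - vv y z i| ≤
      (m₂ * (N:ℝ)⁻¹) * ((N:ℝ)⁻¹ * (S + |qq N y z (i - k)|)) := by gcongr
    have : 0 ≤ m₂ * (N:ℝ)⁻¹ ^ 2 * (k:ℝ) * |qq N y z (i - k)| := by positivity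
    nlinarith

noncomputable def D1 (L m₁ m₂ : ℝ) : ℝ :=
  (L / π) * (3 * (2 * π * m₂ / L) * (π * m₂ / L) ^ 2 / (2 * m₁ / L) ^ 4)

lemma GoodY.near (h : GoodY N L m₁ m₂ y) (i : ℤ) (k : ℕ) (hk0 : 0 < (k:ℝ) * (N:ℝ)⁻¹)
    (hk : m₂ * ((k:ℝ) * (N:ℝ)⁻¹) ≤ L / 2) :
    |(z (i + k) - z i) / sin (π * (y (i + k) - y i) / L) ^ 2 +
      (z (i - k) - z i) / sin (π * (y (i - k) - y i) / L) ^ 2| ≤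
    D1 L m₁ m₂ * |vv y z i| + (m₂ / (2 * m₁ / L) ^ 2) * ((k:ℝ)⁻¹ *
      ∑ r ∈ Finset.range k, (|qq N y z (i + 1 + r)| + |qq N y z (i - r)|)) := by
  have a0 := h.a_pos
  have hL := h.hL
  have hm := h.h1
  have hm2 := h.h2
  have hp := Real.pi_pos
  have s1 := h.sin_near i k hk
  have s2 := h.sin_near' i k hk
  have R1 := h.R_up (z := z) i k
  have R2 := h.R_down (z := z) i k
  have g1 := h.gap_lo i k
  have g2 := h.gap_lo' i k
  have g3 := h.gap_hi i k
  have g4 := h.gap_hi' i k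
  have g0 : 0 ≤ m₁ * ((k:ℝ) * (N:ℝ)⁻¹) := by positivity
  have P := sq_pair _ _ (2 * m₁ / L) (π * m₂ / L) _ _ (by positivity) hk0 s1 s2
    (h.angle_diff i k) (by have := g0.trans g1; positivity) (by have := g0.trans g2; positivity)
    (by rw [show π * m₂ / L * ((k:ℝ) * (N:ℝ)⁻¹) = π * (m₂ * ((k:ℝ) * (N:ℝ)⁻¹)) / L by ring]; gcongr)
    (by rw [show π * m₂ / L * ((k:ℝ) * (N:ℝ)⁻¹) = π * (m₂ * ((k:ℝ) * (N:ℝ)⁻¹)) / L by ring]; gcongr)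
  have es : sin (π * (y (i - k) - y i) / L) ^ 2 = sin (π * (y i - y (i - k)) / L) ^ 2 := by
    rw [show π * (y (i - k) - y i) / L = -(π * (y i - y (i - k)) / L) by ring, sin_neg, neg_sq]
  rw [es, Finset.sum_add_distrib]
  have kpos : 0 < (k:ℝ) := by
    by_contra hc
    have : (k:ℝ) * (N:ℝ)⁻¹ ≤ 0 := mul_nonpos_of_nonpos_of_nonneg (not_lt.1 hc) a0.le
    linarith
  have cpos : 0 < (2 * m₁ / L) * ((k:ℝ) * (N:ℝ)⁻¹) := by positivity
  generalize ∑ r ∈ Finset.range k, |qq N y z (i + 1 + r)| = S1 at *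
  generalize ∑ r ∈ Finset.range k, |qq N y z (i - r)| = S2 at *
  have q1 := abs_div_le' (by positivity) R1 (pow_le_pow_left₀ cpos.le s1 2)
  have q2 := abs_div_le' (by positivity) R2 (pow_le_pow_left₀ cpos.le s2 2)
  have eq : ∀ S : ℝ, m₂ * (N:ℝ)⁻¹ ^ 2 * k * S / ((2 * m₁ / L) * ((k:ℝ) * (N:ℝ)⁻¹)) ^ 2 =
      (m₂ / (2 * m₁ / L) ^ 2) * ((k:ℝ)⁻¹ * S) := by
    intro S
    have : (N:ℝ) ≠ 0 := by
      intro h0; rw [h0] at a0; simp at a0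
    field_simp
  rw [eq] at q1 q2
  have e : (z (i + k) - z i) / sin (π * (y (i + k) - y i) / L) ^ 2 +
      (z (i - k) - z i) / sin (π * (y i - y (i - k)) / L) ^ 2 =
      vv y z i * ((L / π) * (π * (y (i + k) - y i) / L / sin (π * (y (i + k) - y i) / L) ^ 2
        - π * (y i - y (i - k)) / L / sin (π * (y i - y (i - k)) / L) ^ 2)) +
      ((z (i + k) - z i - vv y z i * (y (i + k) - y i)) / sin (π * (y (i + k) - y i) / L) ^ 2
       - (z i - z (i - k) - vv y z i * (y i - y (i - k))) /
          sin (π * (y i - y (i - k)) / L) ^ 2) := by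
    generalize sin (π * (y (i + k) - y i) / L) = t1
    generalize sin (π * (y i - y (i - k)) / L) = t2
    have : ∀ x t : ℝ, (L / π) * (π * x / L / t) = x / t := by
      intro x t
      rw [show (L / π) * (π * x / L / t) = (L / L) * (π / π) * (x / t) by ring,
        div_self hL.ne', div_self hp.ne']; ring
    rw [mul_sub (L / π), this, this]
    ring
  rw [e]
  refine (abs_add_le _ _).trans ?_
  refine (add_le_add le_rfl (abs_sub _ _)).trans ?_
  rw [abs_mul, abs_mul, abs_of_pos (show 0 < L / π by positivity)]
  have : |vv y z i| * ((L / π) * |π * (y (i + k) - y i) / L / sin (π * (y (i + k) - y i) / L) ^ 2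
        - π * (y i - y (i - k)) / L / sin (π * (y i - y (i - k)) / L) ^ 2|)
      ≤ |vv y z i| * D1 L m₁ m₂ := by
    unfold D1; gcongr
  rw [mul_add, mul_add]
  linarith

lemma GoodY.far (h : GoodY N L m₁ m₂ y) (i : ℤ) (k : ℕ) (e : ℝ) (he : 0 < e)
    (hkN : k ≤ N) (h1 : e ≤ (k:ℝ) * (N:ℝ)⁻¹) (h2 : e ≤ ((N - k : ℕ):ℝ) * (N:ℝ)⁻¹) :
    |(z (i + k) - z i) / sin (π * (y (i + k) - y i) / L) ^ 2| ≤
      (1 / ((2 * m₁ / L) * e) ^ 2) * (|z (i + k)| + |z i|) := by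
  have hL := h.hL
  have hm := h.h1
  have s1 := h.sin_far i k e he hkN h1 h2
  have cpos : 0 < (2 * m₁ / L) * e := by positivity
  refine (abs_div_le' (by positivity) (abs_sub (z (i + k)) (z i))
    (pow_le_pow_left₀ cpos.le s1 2)).trans (le_of_eq ?_)
  ring

/-- the nonlocal term tested against q -/
lemma GoodY.nonlocal (h : GoodY N L m₁ m₂ y) (hz : ∀ i, z (i + (N:ℤ)) = z i)
    (e : ℝ) (he : 0 < e) (he1 : e < 1 / 2) (he2 : m₂ * e ≤ L / 2) (η : ℝ) (hη : 0 < η) :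
    PS N (fun i => qq N y z i * ((N:ℝ)⁻¹ * ∑ j ∈ Finset.Ico (i + 1) (i + (N:ℤ)),
      (z j - z i) / sin (π * (y j - y i) / L) ^ 2)) ≤
    D1 L m₁ m₂ * PS N (fun i => |qq N y z i| * |vv y z i|) +
    e * ((m₂ / (2 * m₁ / L) ^ 2) * (2 * PS N (fun i => qq N y z i ^ 2))) +
    (1 / ((2 * m₁ / L) * e) ^ 2) * (2 * (η * PS N (fun i => qq N y z i ^ 2) +
      (1 / (4 * η)) * PS N (fun i => z i ^ 2))) := by
  obtain ⟨hK, hK1, hn, hf⟩ := h.cut e he he1 _ rfl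
  set K := ⌊e * N⌋₊
  have hL := h.hL
  have hm := h.h1
  have hm2 := h.h2
  have a0 := h.a_pos
  have hp := Real.pi_pos
  have hD : 0 ≤ D1 L m₁ m₂ := by unfold D1; positivity
  set Q := PS N (fun i => qq N y z i ^ 2) with hQ
  set Z := PS N (fun i => z i ^ 2) with hZ
  have hQ0 : 0 ≤ Q := PS_sq_nonneg _ _
  have hZ0 : 0 ≤ Z := PS_sq_nonneg _ _
  set C2 := m₂ / (2 * m₁ / L) ^ 2 with hC2
  set Cf := 1 / ((2 * m₁ / L) * e) ^ 2 with hCf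
  have hC20 : 0 ≤ C2 := by positivity
  have hCf0 : 0 ≤ Cf := by positivity
  -- pointwise
  have pw : ∀ i, qq N y z i * ((N:ℝ)⁻¹ * ∑ j ∈ Finset.Ico (i + 1) (i + (N:ℤ)),
      (z j - z i) / sin (π * (y j - y i) / L) ^ 2) ≤
      (N:ℝ)⁻¹ * (∑ k ∈ Finset.Ico 1 (K + 1), (D1 L m₁ m₂ * (|qq N y z i| * |vv y z i|) +
        C2 * ((k:ℝ)⁻¹ * ∑ r ∈ Finset.range k, (|qq N y z i| * |qq N y z (i + (1 + r))| +
          |qq N y z i| * |qq N y z (i + -(r:ℤ))|))) +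
       ∑ k ∈ Finset.Ico (K + 1) (N - K), Cf * (|qq N y z i| * |z (i + (k:ℤ))| +
         |qq N y z i| * |z (i + 0)|)) := by
    intro i
    rw [window N K hK (fun j => (z j - z i) / sin (π * (y j - y i) / L) ^ 2)
      (fun j => by rw [hz, h.sin_per]) i]
    refine (le_abs_self _).trans ?_
    rw [abs_mul, abs_mul, abs_of_pos a0, mul_left_comm]
    refine mul_le_mul_of_nonneg_left ?_ a0.le
    refine (mul_le_mul_of_nonneg_left (abs_add_le _ _) (abs_nonneg _)).trans ?_
    rw [mul_add]
    refine add_le_add ?_ ?_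
    · refine (mul_le_mul_of_nonneg_left (Finset.abs_sum_le_sum_abs _ _) (abs_nonneg _)).trans ?_
      rw [Finset.mul_sum]
      refine Finset.sum_le_sum (fun k hk => ?_)
      obtain ⟨k0, k1⟩ := hn k hk
      have hk' : m₂ * ((k:ℝ) * (N:ℝ)⁻¹) ≤ L / 2 := le_trans (by gcongr) he2
      refine (mul_le_mul_of_nonneg_left (h.near i k k0 hk') (abs_nonneg _)).trans (le_of_eq ?_)
      rw [← hC2]
      have : ∑ r ∈ Finset.range k, (|qq N y z i| * |qq N y z (i + (1 + r))| +
          |qq N y z i| * |qq N y z (i + -(r:ℤ))|) = |qq N y z i| *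
          ∑ r ∈ Finset.range k, (|qq N y z (i + 1 + r)| + |qq N y z (i - r)|) := by
        rw [Finset.mul_sum]
        refine Finset.sum_congr rfl (fun r _ => ?_)
        rw [add_assoc, ← sub_eq_add_neg]; ring
      rw [this]; ring
    · refine (mul_le_mul_of_nonneg_left (Finset.abs_sum_le_sum_abs _ _) (abs_nonneg _)).trans ?_
      rw [Finset.mul_sum]
      refine Finset.sum_le_sum (fun k hk => ?_)
      obtain ⟨k0, k1, k2⟩ := hf k hk
      refine (mul_le_mul_of_nonneg_left (h.far i k e he k0 k1 k2) (abs_nonneg _)).trans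
        (le_of_eq ?_)
      rw [add_zero]; ring
  refine (PS_mono _ _ _ pw).trans ?_
  have qp := h.q_per hz
  have qyoung : ∀ r : ℤ, PS N (fun i => |qq N y z i| * |qq N y z (i + r)|) ≤ Q := by
    intro r
    refine (PS_young N _ _ qp r (1/2) (by norm_num)).trans (le_of_eq ?_)
    rw [← hQ]; ring
  have zyoung : ∀ r : ℤ, PS N (fun i => |qq N y z i| * |z (i + r)|) ≤
      η * Q + (1 / (4 * η)) * Z := fun r => PS_young N _ _ hz r η hη
  rw [PS_mul, PS_add, PS_sum, PS_sum]
  have b1 : ∑ k ∈ Finset.Ico 1 (K + 1), PS N (fun i =>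
        (D1 L m₁ m₂ * (|qq N y z i| * |vv y z i|) +
        C2 * ((k:ℝ)⁻¹ * ∑ r ∈ Finset.range k, (|qq N y z i| * |qq N y z (i + (1 + r))| +
          |qq N y z i| * |qq N y z (i + -(r:ℤ))|)))) ≤
      K * (D1 L m₁ m₂ * PS N (fun i => |qq N y z i| * |vv y z i|) + C2 * (2 * Q)) := by
    refine (Finset.sum_le_card_nsmul _ _ (D1 L m₁ m₂ * PS N (fun i => |qq N y z i| * |vv y z i|)
      + C2 * (2 * Q)) ?_).trans ?_
    · intro k hk
      have k1 : 0 < (k:ℝ) := by simp at hk; exact_mod_cast (by omega)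
      rw [PS_add, PS_mul, PS_mul, PS_mul, PS_sum]
      refine add_le_add le_rfl (mul_le_mul_of_nonneg_left ?_ hC20)
      rw [inv_mul_le_iff₀ k1]
      refine (Finset.sum_le_card_nsmul _ _ (2 * Q) ?_).trans ?_
      · intro r _
        rw [PS_add]
        have := qyoung (1 + r)
        have := qyoung (-(r:ℤ))
        linarith
      · simp
    · simp [mul_add]
  have b2 : ∑ k ∈ Finset.Ico (K + 1) (N - K), PS N (fun i =>
      Cf * (|qq N y z i| * |z (i + (k:ℤ))| + |qq N y z i| * |z (i + 0)|)) ≤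
      N * (Cf * (2 * (η * Q + (1 / (4 * η)) * Z))) := by
    refine (Finset.sum_le_card_nsmul _ _ (Cf * (2 * (η * Q + (1 / (4 * η)) * Z))) ?_).trans ?_
    · intro k hk
      rw [PS_mul, PS_add]
      gcongr
      have := zyoung k
      have := zyoung 0
      linarith
    · simp only [Nat.card_Ico, nsmul_eq_mul]
      have : 0 ≤ 1 / (4 * η) := by positivity
      gcongr
      omega
  have hX : 0 ≤ PS N (fun i => |qq N y z i| * |vv y z i|) :=
    Finset.sum_nonneg (fun i _ => by positivity)
  refine (mul_le_mul_of_nonneg_left (add_le_add b1 b2) a0.le).trans ?_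
  generalize PS N (fun i => |qq N y z i| * |vv y z i|) = X at *
  have e1 : (N:ℝ)⁻¹ * (K * (D1 L m₁ m₂ * X + C2 * (2 * Q)) +
      N * (Cf * (2 * (η * Q + (1 / (4 * η)) * Z)))) =
      ((N:ℝ)⁻¹ * K) * (D1 L m₁ m₂ * X) + ((N:ℝ)⁻¹ * K) * (C2 * (2 * Q)) +
      ((N:ℝ)⁻¹ * N) * (Cf * (2 * (η * Q + (1 / (4 * η)) * Z))) := by ring
  rw [e1, h.aN, one_mul]
  have i1 : ((N:ℝ)⁻¹ * K) * (D1 L m₁ m₂ * X) ≤ 1 * (D1 L m₁ m₂ * X) :=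
    mul_le_mul_of_nonneg_right (by linarith) (by positivity)
  have i2 : ((N:ℝ)⁻¹ * K) * (C2 * (2 * Q)) ≤ e * (C2 * (2 * Q)) :=
    mul_le_mul_of_nonneg_right hK1 (by positivity)
  linarith

end
section
variable {N : ℕ} {L m₁ m₂ : ℝ} {y z : ℤ → ℝ}

lemma sum_window_per (N : ℕ) (F G : ℤ → ℝ) (hFG : ∀ j, F (j + (N:ℤ)) = G j) (i : ℤ) :
    ∑ j ∈ Finset.Ico (i + N + 1) (i + N + (N:ℤ)), F j =
      ∑ j ∈ Finset.Ico (i + 1) (i + (N:ℤ)), G j := by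
  refine Finset.sum_nbij' (fun j => j - N) (fun j => j + N) ?_ ?_ ?_ ?_ ?_
  · intro j; simp; omega
  · intro j; simp
  · intro j; simp
  · intro j; simp
  · intro j _; simp [← hFG]

lemma GoodY.M_per (h : GoodY N L m₁ m₂ y) (i : ℤ) :
    Mlin N L y (i + (N:ℤ)) = Mlin N L y i := by
  unfold Mlin
  rw [sum_window_per N _ (fun j => Real.cot (π * (y j - y i) / L)) (fun j => by
    rw [h.per, h.per]; congr 2; ring),
    show i + (N:ℤ) + 1 = (i + 1) + N by ring, show i + (N:ℤ) - 1 = (i - 1) + N by ring,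
    h.per, h.per, h.per]
  simp only [add_sub_add_right_eq_sub]

lemma GoodY.T_per (h : GoodY N L m₁ m₂ y) (hz : ∀ i, z (i + (N:ℤ)) = z i) (i : ℤ) :
    Tlin N L y z (i + (N:ℤ)) = Tlin N L y z i := by
  unfold Tlin
  rw [sum_window_per N _ (fun j => (z j - z i) / Real.sin (π * (y j - y i) / L) ^ 2) (fun j => by
    rw [h.per, h.per, hz, hz]; congr 4; ring),
    show i + (N:ℤ) + 1 = (i + 1) + N by ring, show i + (N:ℤ) - 1 = (i - 1) + N by ring,
    h.per, h.per, h.per, hz, hz, hz]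
  simp only [add_sub_add_right_eq_sub]

lemma GoodY.energy (h : GoodY N L m₁ m₂ y) (hz : ∀ i, z (i + (N:ℤ)) = z i) :
    PS N (fun i => z i * Zrhs N L y z i) =
      PS N (fun i => Tlin N L y z i * qq N y z i) -
      PS N (fun i => Mlin N L y i * (qq N y z i * (vv y z i + vv y z (i - 1)))) := by
  have vp := h.v_per hz
  have a0 := h.a_pos
  have aN := h.aN
  set X : ℤ → ℝ := fun i => (Tlin N L y z (i + 1) - Tlin N L y z i) / (y (i + 1) - y i) -
    (vv y z i / (y (i + 1) - y i)) * (Mlin N L y (i + 1) - Mlin N L y i) with hX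
  have Xp : ∀ i, X (i + (N:ℤ)) = X i := by
    intro i
    simp only [hX]
    rw [show i + (N:ℤ) + 1 = (i + 1) + N by ring, h.T_per hz, h.T_per hz, h.M_per, h.M_per,
      vp, h.per, h.per, add_sub_add_right_eq_sub]
  have e1 : PS N (fun i => z i * Zrhs N L y z i) = N * PS N (fun i => z i * (X i - X (i - 1))) := by
    rw [← PS_mul]; congr 1; ext i
    unfold Zrhs
    simp only [hX]
    unfold vv
    rw [sub_add_cancel]
    generalize y (i + 1) - y i = Y
    generalize y i - y (i - 1) = W
    ring
  rw [e1, PS_parts N z X hz Xp]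
  have e2 : PS N (fun i => (z (i + 1) - z i) * X i) =
      PS N (fun i => (Tlin N L y z (i + 1) - Tlin N L y z i) * vv y z i) -
      PS N (fun i => (Mlin N L y (i + 1) - Mlin N L y i) * vv y z i ^ 2) := by
    rw [← PS_sub]; congr 1; ext i
    rw [h.z_diff]
    simp only [hX]
    have := h.Y_pos i
    field_simp
  have e3 := PS_parts N (Tlin N L y z) (vv y z) (h.T_per hz) vp
  have e4 := PS_parts N (Mlin N L y) (fun i => vv y z i ^ 2) h.M_per (fun i => by rw [vp])
  have e5 : PS N (fun i => Tlin N L y z i * (vv y z i - vv y z (i - 1))) =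
      (N:ℝ)⁻¹ * PS N (fun i => Tlin N L y z i * qq N y z i) := by
    rw [← PS_mul]; congr 1; ext i
    rw [h.v_diff]; ring
  have e6 : PS N (fun i => Mlin N L y i * (vv y z i ^ 2 - vv y z (i - 1) ^ 2)) =
      (N:ℝ)⁻¹ * PS N (fun i => Mlin N L y i * (qq N y z i * (vv y z i + vv y z (i - 1)))) := by
    rw [← PS_mul]; congr 1; ext i
    rw [show vv y z i ^ 2 - vv y z (i - 1) ^ 2 =
      (vv y z i - vv y z (i - 1)) * (vv y z i + vv y z (i - 1)) by ring, h.v_diff]; ring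
  rw [e2]
  rw [e5] at e3
  rw [e6] at e4
  generalize PS N (fun i => Tlin N L y z i * qq N y z i) = A at *
  generalize PS N (fun i => Mlin N L y i * (qq N y z i * (vv y z i + vv y z (i - 1)))) = B at *
  linear_combination (-(N:ℝ)) * e3 + N * e4 + (A - B) * aN

lemma GoodY.interp (h : GoodY N L m₁ m₂ y) (hz : ∀ i, z (i + (N:ℤ)) = z i) :
    m₁ * PS N (fun i => vv y z i ^ 2) ≤ PS N (fun i => |qq N y z i| * |z (i + 0)|) := by
  have a0 := h.a_pos
  have e3 := PS_parts N z (vv y z) hz (h.v_per hz)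
  have i1 : (N:ℝ)⁻¹ * (m₁ * PS N (fun i => vv y z i ^ 2)) ≤
      PS N (fun i => (z (i + 1) - z i) * vv y z i) := by
    rw [← PS_mul, ← PS_mul]
    apply PS_mono
    intro i
    rw [h.z_diff]
    nlinarith [mul_le_mul_of_nonneg_right (h.lo i) (sq_nonneg (vv y z i))]
  have i2 : - PS N (fun i => z i * (vv y z i - vv y z (i - 1))) ≤
      (N:ℝ)⁻¹ * PS N (fun i => |qq N y z i| * |z (i + 0)|) := by
    rw [neg_eq_neg_one_mul, ← PS_mul, ← PS_mul]
    apply PS_mono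
    intro i
    rw [h.v_diff, add_zero, ← abs_mul]
    have := neg_abs_le (qq N y z i * z i)
    nlinarith
  rw [e3, neg_neg] at i2
  exact le_of_mul_le_mul_left (i1.trans i2) a0

lemma GoodY.Tloc (h : GoodY N L m₁ m₂ y) (i : ℤ) :
    Tlin N L y z i * qq N y z i ≤ -(1 / m₂) * qq N y z i ^ 2 +
      (2 * m₂ / m₁ ^ 2 + 3 * (6 * m₂ / m₁ ^ 4)) * (|qq N y z i| * |vv y z (i + -1)|) +
      (2 * π ^ 2 / L ^ 3) * (qq N y z i * ((N:ℝ)⁻¹ * ∑ j ∈ Finset.Ico (i + 1) (i + (N:ℤ)),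
      (z j - z i) / sin (π * (y j - y i) / L) ^ 2)) := by
  have hd := h.v_diff (z := z) i
  have i1 := h.inv_diff i
  have i3 := h.inv_diff3 i
  obtain ⟨u0, -, u2⟩ := h.inv_bd i
  have a0 := h.a_pos
  rw [← sub_eq_add_neg]
  set G1 := 1 / (y (i + 1) - y i) with hG1
  set G3 := (N:ℝ)⁻¹ ^ 2 / (y (i + 1) - y i) ^ 3 with hG3
  set H1 := 1 / (y i - y (i - 1)) with hH1
  set H3 := (N:ℝ)⁻¹ ^ 2 / (y i - y (i - 1)) ^ 3 with hH3
  have e : Tlin N L y z i = -((G1 + 3 * G3) * vv y z i - (H1 + 3 * H3) * vv y z (i - 1)) +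
      (2 * π ^ 2 / L ^ 3) * ((N:ℝ)⁻¹ * ∑ j ∈ Finset.Ico (i + 1) (i + (N:ℤ)),
      (z j - z i) / sin (π * (y j - y i) / L) ^ 2) := by
    unfold Tlin vv
    rw [sub_add_cancel, hG1, hG3, hH1, hH3]
    have Y1 := (h.Y_pos i).ne'
    have Y2 := (h.Y_pos (i - 1)).ne'
    rw [sub_add_cancel] at Y2
    generalize y (i + 1) - y i = Y at *
    generalize y i - y (i - 1) = W at *
    generalize ∑ j ∈ Finset.Ico (i + 1) (i + (N:ℤ)),
      (z j - z i) / sin (π * (y j - y i) / L) ^ 2 = S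
    field_simp
    ring
  have g3 : 0 ≤ G3 := by
    have := h.Y_pos i
    positivity
  rw [e, add_mul]
  have e2 : -((G1 + 3 * G3) * vv y z i - (H1 + 3 * H3) * vv y z (i - 1)) * qq N y z i
    = -((N:ℝ)⁻¹ * G1 + (N:ℝ)⁻¹ * 3 * G3) * qq N y z i ^ 2
      - ((G1 - H1) + 3 * (G3 - H3)) * (qq N y z i * vv y z (i - 1)) := by
    linear_combination (-(G1 + 3 * G3) * qq N y z i) * hd
  rw [e2]
  have t1 : -((N:ℝ)⁻¹ * G1 + (N:ℝ)⁻¹ * 3 * G3) * qq N y z i ^ 2 ≤ -(1 / m₂) * qq N y z i ^ 2 := by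
    apply mul_le_mul_of_nonneg_right _ (sq_nonneg _)
    have : 0 ≤ (N:ℝ)⁻¹ * 3 * G3 := by positivity
    linarith
  have t2 : - (((G1 - H1) + 3 * (G3 - H3)) * (qq N y z i * vv y z (i - 1))) ≤
     (2 * m₂ / m₁ ^ 2 + 3 * (6 * m₂ / m₁ ^ 4)) * (|qq N y z i| * |vv y z (i - 1)|) := by
    refine (neg_le_abs _).trans ?_
    rw [abs_mul, abs_mul]
    apply mul_le_mul_of_nonneg_right _ (by positivity)
    refine (abs_add_le _ _).trans ?_
    rw [abs_mul, abs_of_pos (show (0:ℝ) < 3 by norm_num)]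
    linarith
  linarith

/-- the master inequality with parameters -/
lemma GoodY.master (h : GoodY N L m₁ m₂ y) (hz : ∀ i, z (i + (N:ℤ)) = z i)
    (e : ℝ) (he : 0 < e) (he1 : e < 1 / 2) (he2 : m₂ * e ≤ L / 2) (η η₁ η₂ : ℝ) (hη : 0 < η)
    (hη₁ : 0 < η₁) (hη₂ : 0 < η₂) (A : ℝ)
    (hA : A = (2 * m₂ / m₁ ^ 2 + 3 * (6 * m₂ / m₁ ^ 4)) + (2 * π ^ 2 / L ^ 3) * D1 L m₁ m₂ +
      2 * CM L m₁ m₂ e) (Q Z : ℝ) (hQ : Q = PS N (fun i => qq N y z i ^ 2))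
    (hZ : Z = PS N (fun i => z i ^ 2)) :
    PS N (fun i => z i * Zrhs N L y z i) ≤ -(1 / m₂) * Q +
      A * (η₁ * Q + (1 / (4 * η₁)) * ((1 / m₁) * (η₂ * Q + (1 / (4 * η₂)) * Z))) +
      (2 * π ^ 2 / L ^ 3) * (e * ((m₂ / (2 * m₁ / L) ^ 2) * (2 * Q)) +
        (1 / ((2 * m₁ / L) * e) ^ 2) * (2 * (η * Q + (1 / (4 * η)) * Z))) := by
  have hL := h.hL
  have hm := h.h1
  have hm2 := h.h2
  have a0 := h.a_pos
  have hp := Real.pi_pos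
  have hD : 0 ≤ D1 L m₁ m₂ := by unfold D1; positivity
  have hC : 0 ≤ CM L m₁ m₂ e := by unfold CM; positivity
  have nl := h.nonlocal hz e he he1 he2 η hη
  have vp := h.v_per hz
  have y0 := PS_young N (qq N y z) (vv y z) vp 0 η₁ hη₁
  have y1 := PS_young N (qq N y z) (vv y z) vp (-1) η₁ hη₁
  have y2 := PS_young N (qq N y z) z hz 0 η₂ hη₂
  have ip := h.interp hz
  have hT : PS N (fun i => Tlin N L y z i * qq N y z i) ≤
      -(1 / m₂) * PS N (fun i => qq N y z i ^ 2) +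
      (2 * m₂ / m₁ ^ 2 + 3 * (6 * m₂ / m₁ ^ 4)) *
        PS N (fun i => |qq N y z i| * |vv y z (i + -1)|) +
      (2 * π ^ 2 / L ^ 3) * PS N (fun i => qq N y z i * ((N:ℝ)⁻¹ *
        ∑ j ∈ Finset.Ico (i + 1) (i + (N:ℤ)),
          (z j - z i) / sin (π * (y j - y i) / L) ^ 2)) := by
    rw [← PS_mul, ← PS_mul, ← PS_mul, ← PS_add, ← PS_add]
    exact PS_mono _ _ _ (fun i => h.Tloc i)
  have hM : - PS N (fun i => Mlin N L y i * (qq N y z i * (vv y z i + vv y z (i - 1)))) ≤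
      CM L m₁ m₂ e * (PS N (fun i => |qq N y z i| * |vv y z (i + 0)|) +
        PS N (fun i => |qq N y z i| * |vv y z (i + -1)|)) := by
    rw [← PS_add, ← PS_mul, neg_eq_neg_one_mul, ← PS_mul]
    apply PS_mono
    intro i
    rw [neg_one_mul]
    refine (neg_le_abs _).trans ?_
    rw [abs_mul, abs_mul, add_zero, ← sub_eq_add_neg, ← mul_add]
    have := h.M_bd e he he1 he2 i
    gcongr
    exact abs_add_le _ _
  rw [h.energy hz]
  simp only [add_zero] at y0 y2 ip hM
  rw [← hQ] at *
  rw [← hZ] at *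
  generalize PS N (fun i => |qq N y z i| * |vv y z (i + -1)|) = X1 at *
  generalize PS N (fun i => |qq N y z i| * |vv y z i|) = X0 at *
  generalize PS N (fun i => |qq N y z i| * |z i|) = X2 at *
  generalize PS N (fun i => vv y z i ^ 2) = V at *
  set W := (1 / m₁) * (η₂ * Q + (1 / (4 * η₂)) * Z) with hW
  have hV : V ≤ W := by
    rw [hW, one_div_mul_eq_div, le_div_iff₀ hm]; linarith
  have hy : η₁ * Q + 1 / (4 * η₁) * V ≤ η₁ * Q + 1 / (4 * η₁) * W := by gcongr
  set U := η₁ * Q + 1 / (4 * η₁) * W with hU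
  have hX0 : X0 ≤ U := y0.trans hy
  have hX1 : X1 ≤ U := y1.trans hy
  set c := 2 * m₂ / m₁ ^ 2 + 3 * (6 * m₂ / m₁ ^ 4) with hc
  have hc0 : 0 ≤ c := by positivity
  set κ := 2 * π ^ 2 / L ^ 3 with hκ
  have hκ0 : 0 ≤ κ := by positivity
  have j1 := mul_le_mul_of_nonneg_left hX1 hc0
  have j2 := mul_le_mul_of_nonneg_left nl hκ0
  have j3 := mul_le_mul_of_nonneg_left (mul_le_mul_of_nonneg_left hX0 hD) hκ0
  have j4 := mul_le_mul_of_nonneg_left (add_le_add hX0 hX1) hC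
  rw [hA]
  linarith

end

theorem static_bound (L m₁ m₂ : ℝ) (hL : 0 < L) (hm₁ : 0 < m₁) (hm₂ : 0 < m₂) :
    ∃ C : ℝ, 0 < C ∧ ∀ (N : ℕ) (y z : ℤ → ℝ), GoodY N L m₁ m₂ y →
      (∀ i, z (i + (N:ℤ)) = z i) →
      PS N (fun i => z i * Zrhs N L y z i) ≤ C * PS N (fun i => z i ^ 2) := by
  have hp := Real.pi_pos
  set κ := 2 * π ^ 2 / L ^ 3 with hκ
  have hκ0 : 0 < κ := by positivity
  set C2 := m₂ / (2 * m₁ / L) ^ 2 with hC2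
  have hC20 : 0 < C2 := by positivity
  obtain ⟨e, he, he1, he2, he3⟩ : ∃ e : ℝ, 0 < e ∧ e < 1 / 2 ∧ m₂ * e ≤ L / 2 ∧
      κ * (e * (C2 * 2)) ≤ 1 / (4 * m₂) := by
    refine ⟨min (1 / 4) (min (L / 2 / m₂) (1 / (4 * m₂) / (κ * (C2 * 2)))), by positivity, ?_, ?_, ?_⟩
    · exact lt_of_le_of_lt (min_le_left _ _) (by norm_num)
    · have := (min_le_right (1/4) _).trans (min_le_left (L / 2 / m₂) (1 / (4 * m₂) / (κ * (C2 * 2))))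
      rw [le_div_iff₀ hm₂] at this
      linarith
    · have := (min_le_right (1/4) _).trans (min_le_right (L / 2 / m₂) (1 / (4 * m₂) / (κ * (C2 * 2))))
      rw [le_div_iff₀ (by positivity)] at this
      linarith
  set Cf := 1 / ((2 * m₁ / L) * e) ^ 2 with hCf
  have hCf0 : 0 < Cf := by positivity
  obtain ⟨A, hA⟩ : ∃ A, A = (2 * m₂ / m₁ ^ 2 + 3 * (6 * m₂ / m₁ ^ 4)) + κ * D1 L m₁ m₂ +
      2 * CM L m₁ m₂ e := ⟨_, rfl⟩
  have hA0 : 0 < A := by rw [hA]; unfold D1 CM; positivity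
  set η₁ := 1 / (4 * m₂) / A with hη₁
  have h1 : 0 < η₁ := by positivity
  set η := 1 / (4 * m₂) / (κ * Cf * 2) with hη
  have h0 : 0 < η := by positivity
  set B := A * (1 / (4 * η₁)) * (1 / m₁) with hB
  have hB0 : 0 < B := by positivity
  set η₂ := 1 / (4 * m₂) / B with hη₂
  have h2 : 0 < η₂ := by positivity
  refine ⟨B * (1 / (4 * η₂)) + κ * Cf * 2 * (1 / (4 * η)), by positivity, ?_⟩
  intro N y z h hz
  have M := h.master hz e he he1 he2 η η₁ η₂ h0 h1 h2 A hA _ _ rfl rfl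
  have Q0 := PS_sq_nonneg N (qq N y z)
  rw [← hκ, ← hC2, ← hCf] at M
  generalize PS N (fun i => qq N y z i ^ 2) = Q at *
  generalize PS N (fun i => z i ^ 2) = Z at *
  have f1 : A * η₁ = 1 / (4 * m₂) := by rw [hη₁]; field_simp
  have f2 : B * η₂ = 1 / (4 * m₂) := by rw [hη₂]; field_simp
  have f3 : κ * Cf * 2 * η = 1 / (4 * m₂) := by rw [hη]; field_simp
  have f4 : 1 / m₂ = 4 * (1 / (4 * m₂)) := by field_simp
  have f5 := mul_le_mul_of_nonneg_right he3 Q0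
  refine M.trans ?_
  have e1 : -(1 / m₂) * Q +
      A * (η₁ * Q + (1 / (4 * η₁)) * ((1 / m₁) * (η₂ * Q + (1 / (4 * η₂)) * Z))) +
      κ * (e * (C2 * (2 * Q)) + Cf * (2 * (η * Q + (1 / (4 * η)) * Z))) =
      (-(1 / m₂) + A * η₁ + B * η₂ + κ * Cf * 2 * η) * Q + κ * (e * (C2 * 2)) * Q +
      (B * (1 / (4 * η₂)) + κ * Cf * 2 * (1 / (4 * η))) * Z := by
    rw [hB]; ring
  rw [e1, f1, f2, f3, f4]
  linarith
lemma goodY_of_profile (N : ℕ) (hN : 2 ≤ N) (L m₁ m₂ : ℝ) (hL : 0 < L) (hm₁ : 0 < m₁)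
    (hm₂ : 0 < m₂) (f : ℝ → ℝ) (hf : ContDiff ℝ 6 f) (hper : ∀ α, f (α + 1) = f α - L)
    (hd : ∀ α, deriv f α ≤ -m₁)
    (hb : ∀ k : ℕ, 1 ≤ k → k ≤ 6 → ∀ α, |iteratedDeriv k f α| ≤ m₂) :
    GoodY N L m₁ m₂ (fun j : ℤ => f (((N:ℝ) - (j:ℝ)) / (N:ℝ))) := by
  have hN0 : (0:ℝ) < N := by exact_mod_cast (by omega)
  have a0 : 0 < (N:ℝ)⁻¹ := by positivity
  have df : Differentiable ℝ f := hf.differentiable (by norm_num)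
  have ddf : Differentiable ℝ (deriv f) := by
    have : ContDiff ℝ (5 + 1) f := by norm_num; exact hf
    exact (contDiff_succ_iff_deriv.1 this).2.2.differentiable (by norm_num)
  have b1 : ∀ α, |deriv f α| ≤ m₂ := by
    intro α; have := hb 1 le_rfl (by norm_num) α; rwa [iteratedDeriv_one] at this
  have b2 : ∀ α, |deriv (deriv f) α| ≤ m₂ := by
    intro α; have := hb 2 (by norm_num) (by norm_num) α
    rwa [iteratedDeriv_succ, iteratedDeriv_one] at this
  have mvt : ∀ i : ℤ, ∃ c, f (((N:ℝ) - ((i + 1 : ℤ):ℝ)) / (N:ℝ)) - f (((N:ℝ) - (i:ℝ)) / (N:ℝ))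
      = -(deriv f c) * (N:ℝ)⁻¹ := by
    intro i
    have e : ((N:ℝ) - ((i + 1 : ℤ):ℝ)) / (N:ℝ) = ((N:ℝ) - (i:ℝ)) / (N:ℝ) - (N:ℝ)⁻¹ := by
      push_cast; field_simp; ring
    rw [e]
    obtain ⟨c, -, hc⟩ := exists_deriv_eq_slope f
      (show ((N:ℝ) - (i:ℝ)) / (N:ℝ) - (N:ℝ)⁻¹ < ((N:ℝ) - (i:ℝ)) / (N:ℝ) by linarith)
      df.continuous.continuousOn df.differentiableOn
    refine ⟨c, ?_⟩
    rw [hc, sub_sub_cancel]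
    field_simp; try ring
  refine ⟨hN, hL, hm₁, hm₂, ?_, ?_, ?_, ?_⟩
  · intro i
    have := hper (((N:ℝ) - ((i + N : ℤ):ℝ)) / (N:ℝ))
    have e : ((N:ℝ) - ((i + N : ℤ):ℝ)) / (N:ℝ) + 1 = ((N:ℝ) - (i:ℝ)) / (N:ℝ) := by
      push_cast; field_simp; ring
    rw [e] at this
    linarith
  · intro i
    obtain ⟨c, hc⟩ := mvt i
    rw [hc]
    have := hd c
    gcongr; linarith
  · intro i
    obtain ⟨c, hc⟩ := mvt i
    rw [hc]
    have := neg_le_of_abs_le (b1 c)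
    gcongr; linarith
  · intro i k
    set x := ((N:ℝ) - (i:ℝ)) / (N:ℝ) with hx
    set s := (k:ℝ) * (N:ℝ)⁻¹ with hs
    have s0 : 0 ≤ s := by positivity
    have e1 : ((N:ℝ) - ((i + k : ℤ):ℝ)) / (N:ℝ) = x - s := by
      rw [hx, hs]; push_cast; field_simp; ring
    have e2 : ((N:ℝ) - ((i - k : ℤ):ℝ)) / (N:ℝ) = x + s := by
      rw [hx, hs]; push_cast; field_simp; ring
    rw [e1, e2]
    have lip : ∀ u w, |deriv f u - deriv f w| ≤ m₂ * |u - w| := by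
      intro u w
      exact Convex.norm_image_sub_le_of_norm_deriv_le (f := deriv f) (s := Set.univ)
        (fun x _ => ddf x) (fun x _ => b2 x) convex_univ (Set.mem_univ _) (Set.mem_univ _)
    have gd : ∀ r : ℝ, HasDerivAt (fun r => f (x - r) + f (x + r))
        (-deriv f (x - r) + deriv f (x + r)) r := by
      intro r
      have h1 : HasDerivAt (fun r => f (x - r)) (deriv f (x - r) * (-1)) r :=
        (df (x - r)).hasDerivAt.comp r ((hasDerivAt_id r).const_sub x)
      have h2 : HasDerivAt (fun r => f (x + r)) (deriv f (x + r) * 1) r :=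
        (df (x + r)).hasDerivAt.comp r ((hasDerivAt_id r).const_add x)
      exact (h1.add h2).congr_deriv (by ring)
    have := Convex.norm_image_sub_le_of_norm_hasDerivWithin_le
      (f := fun r => f (x - r) + f (x + r)) (s := Set.Icc 0 s) (C := 2 * m₂ * s)
      (fun r _ => (gd r).hasDerivWithinAt) (fun r hr => by
        have := lip (x + r) (x - r)
        rw [show x + r - (x - r) = 2 * r by ring, abs_of_nonneg (show 0 ≤ 2 * r by linarith [hr.1])] at this
        rw [Real.norm_eq_abs, neg_add_eq_sub]
        nlinarith [hr.2]) (convex_Icc 0 s) (Set.left_mem_Icc.2 s0) (Set.right_mem_Icc.2 s0)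
    simp only [Real.norm_eq_abs, sub_zero, add_zero, abs_of_nonneg s0] at this
    rw [show f (x - s) + f (x + s) - 2 * f x = f (x - s) + f (x + s) - (f x + f x) by ring]
    linarith

lemma gron (T C : ℝ) (hC : 0 < C) (E E' : ℝ → ℝ)
    (hE : ∀ t ∈ Set.Icc (0:ℝ) T, HasDerivWithinAt E (E' t) (Set.Icc 0 T) t)
    (hle : ∀ t ∈ Set.Icc (0:ℝ) T, E' t ≤ C * E t) (hE0 : ∀ t ∈ Set.Icc (0:ℝ) T, 0 ≤ E t) :
    ∀ t ∈ Set.Icc (0:ℝ) T, E t ≤ exp (C * T) * E 0 := by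
  intro t ht
  have h0 : (0:ℝ) ∈ Set.Icc (0:ℝ) T := ⟨le_rfl, ht.1.trans ht.2⟩
  have hd : ∀ s ∈ Set.Icc (0:ℝ) T, HasDerivWithinAt (fun s => E s * exp (-(C * s)))
      (E' s * exp (-(C * s)) + E s * (exp (-(C * s)) * (-(C * 1)))) (Set.Icc 0 T) s := by
    intro s hs
    refine (hE s hs).mul ?_
    exact (((hasDerivAt_id s).const_mul C).neg.exp).hasDerivWithinAt
  have anti : AntitoneOn (fun s => E s * exp (-(C * s))) (Set.Icc 0 T) := by
    refine antitoneOn_of_hasDerivWithinAt_nonpos (convex_Icc 0 T)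
      (fun s hs => (hd s hs).continuousWithinAt)
      (fun s hs => (hd s (interior_subset hs)).mono interior_subset) ?_
    intro s hs
    have := hle s (interior_subset hs)
    have := mul_le_mul_of_nonneg_right this (exp_pos (-(C * s))).le
    linarith
  have := anti h0 ht ht.1
  simp only [mul_zero, neg_zero, exp_zero, mul_one] at this
  rw [exp_neg, ← div_eq_mul_inv, div_le_iff₀ (exp_pos _)] at this
  have h3 : exp (C * t) ≤ exp (C * T) := exp_le_exp.2 (by gcongr; exact ht.2)
  nlinarith [hE0 0 h0]

/-- Stability of the linearized step-flow ODE system around the exact step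
locations `y_i(t) = φ((N−i)/N, t)` of a profile `φ` with `φ(α+1) = φ(α) − L`,
`φ_α ≤ −m₁ < 0`, `|∂_α^k φ| ≤ m₂` (`1 ≤ k ≤ 6`): every `N`-periodic `C¹` solution `z` of the
linearized system satisfies `‖z(t)‖ ≤ C‖z(0)‖` in the scaled norm
`‖z‖ = (Σ_{i=1}^N a z_i²)^{1/2}`, with `C = C(m₁,m₂,L,T)` independent of `N`. -/
theorem stmt_18 (L T m₁ m₂ : ℝ) (hL : 0 < L) (hT : 0 < T) (hm₁ : 0 < m₁) (hm₂ : 0 < m₂) :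
    ∃ C : ℝ, 0 < C ∧
      ∀ N : ℕ, 2 ≤ N →
        ∀ (φ : ℝ → ℝ → ℝ) (z : ℝ → ℤ → ℝ),
          (∀ α : ℝ, ContinuousOn (fun t => φ α t) (Set.Icc 0 T)) →
          (∀ t ∈ Set.Icc (0:ℝ) T, ContDiff ℝ 6 (fun b => φ b t)) →
          (∀ α : ℝ, ∀ t ∈ Set.Icc (0:ℝ) T, φ (α + 1) t = φ α t - L) →
          (∀ α : ℝ, ∀ t ∈ Set.Icc (0:ℝ) T, deriv (fun b => φ b t) α ≤ -m₁) →
          (∀ k : ℕ, 1 ≤ k → k ≤ 6 → ∀ α : ℝ, ∀ t ∈ Set.Icc (0:ℝ) T,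
            |iteratedDeriv k (fun b => φ b t) α| ≤ m₂) →
          (∀ t ∈ Set.Icc (0:ℝ) T, ∀ i : ℤ, z t (i + (N:ℤ)) = z t i) →
          (∀ i : ℤ, ∀ t ∈ Set.Icc (0:ℝ) T,
            HasDerivWithinAt (fun s => z s i)
              (Zrhs N L (fun j : ℤ => φ (((N:ℝ) - (j:ℝ)) / (N:ℝ)) t) (z t) i)
              (Set.Icc 0 T) t) →
          ∀ t ∈ Set.Icc (0:ℝ) T,
            Real.sqrt (∑ i ∈ Finset.Icc (1:ℤ) (N:ℤ), (N:ℝ)⁻¹ * (z t i) ^ 2)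
              ≤ C * Real.sqrt (∑ i ∈ Finset.Icc (1:ℤ) (N:ℤ), (N:ℝ)⁻¹ * (z 0 i) ^ 2) := by
  obtain ⟨C, hC, hst⟩ := static_bound L m₁ m₂ hL hm₁ hm₂
  refine ⟨exp (C * T), exp_pos _, ?_⟩
  intro N hN φ z _ hcd hper hd hb hz hode t ht
  have key := gron T (2 * C) (by positivity) (fun t => PS N (fun i => z t i ^ 2))
    (fun t => 2 * PS N (fun i => z t i *
      Zrhs N L (fun j : ℤ => φ (((N:ℝ) - (j:ℝ)) / (N:ℝ)) t) (z t) i)) ?_ ?_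
    (fun t _ => PS_sq_nonneg _ _) t ht
  · have e : ∀ s, ∑ i ∈ Finset.Icc (1:ℤ) (N:ℤ), (N:ℝ)⁻¹ * (z s i) ^ 2 =
        (N:ℝ)⁻¹ * PS N (fun i => z s i ^ 2) := fun s => PS_mul N _ _
    rw [e, e]
    rw [show exp (C * T) = Real.sqrt (exp (2 * C * T)) by
      rw [show 2 * C * T = C * T + C * T by ring, exp_add, Real.sqrt_mul_self (exp_pos _).le],
      ← Real.sqrt_mul (exp_pos _).le]
    apply Real.sqrt_le_sqrt
    rw [mul_left_comm]
    exact mul_le_mul_of_nonneg_left key (by positivity)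
  · intro s hs
    have := HasDerivWithinAt.fun_sum (u := Finset.Icc (1:ℤ) (N:ℤ))
      (A := fun i s => z s i ^ 2) (fun i _ => (hode i s hs).pow 2)
    refine this.congr_deriv ?_
    rw [← PS_mul]
    unfold PS
    refine Finset.sum_congr rfl (fun i _ => ?_)
    simp; ring
  · intro s hs
    have g := goodY_of_profile N hN L m₁ m₂ hL hm₁ hm₂ (fun b => φ b s) (hcd s hs)
      (fun α => hper α s hs) (fun α => hd α s hs) (fun k h1 h6 α => hb k h1 h6 α s hs)
    have := hst N _ (z s) g (hz s hs)
    linarith
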